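/- arXiv:1511.05843 — 4 statements merged into one kernel-verified Lean document; each statement's English description precedes it below -/
import Mathlib

section
/- For all finite simple graphs G' and G'' without isolated vertices, there exist finitely many pairwise non-isomorphic finite simple graphs G₁, …, G_m without isolated vertices and natural numbers c₁, …, c_m, depending only on G' and G'', such that for every finite simple graph H one has N_{G'}(H) · N_{G''}(H) = Σ_{i=1}^{m} cᵢ · N_{Gᵢ}(H). -/
/-!
Every pair `(A, B)` of edge sets of `H` with `A` a copy of `G'` and `B` a copy of `G''` is
determined by its union `E = A ∪ B` together with a way of writing `E` as such a union. The number
of ways of writing `E` as such a union depends only on the isomorphism type of the graph spanned by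
`E` (`pairCount_eq_of_iso`), and this graph has no isolated vertices and at most
`|V(G')| + |V(G'')|` vertices (`card_support_le`), so that only finitely many isomorphism types
occur. Choosing one representative `Gᵢ` of each type and letting `cᵢ` be the number of ways of
writing the edge set of `Gᵢ` as a union of a copy of `G'` and a copy of `G''`, the identity follows
by grouping the pairs `(A, B)` according to the type of their union.
-/

open SimpleGraph

/-- The simple graph determined by a set `E` of edges, whose vertex set is the set of
endpoints of edges in `E` and whose edge set is `E`. -/
def graphOfEdges {β : Type*} (E : Set (Sym2 β)) :
    SimpleGraph (SimpleGraph.fromEdgeSet E).support :=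
  SimpleGraph.induce (SimpleGraph.fromEdgeSet E).support (SimpleGraph.fromEdgeSet E)

/-- `countCopies G H` is the number of sets `E'` of edges of `H` such that the simple graph
whose vertex set is the set of endpoints of edges in `E'` and whose edge set is `E'` is
isomorphic to `G`. -/
noncomputable def countCopies {α β : Type*} (G : SimpleGraph α) (H : SimpleGraph β) : ℕ :=
  Nat.card {E : Finset (Sym2 β) // ↑E ⊆ H.edgeSet ∧
    Nonempty (graphOfEdges (E : Set (Sym2 β)) ≃g G)}

/-- A graph has no isolated vertices: every vertex is incident to at least one edge. -/
def NoIsolated {α : Type*} (G : SimpleGraph α) : Prop := ∀ v, ∃ w, G.Adj v w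

/-- The number of ways of writing `E` as a union of two (not necessarily disjoint) edge sets, the
first spanning a copy of `G'` and the second a copy of `G''`. -/
noncomputable def pairCount {α α' γ : Type*} (G' : SimpleGraph α) (G'' : SimpleGraph α')
    (E : Set (Sym2 γ)) : ℕ :=
  Nat.card {p : Finset (Sym2 γ) × Finset (Sym2 γ) // (p.1 : Set (Sym2 γ)) ∪ p.2 = E ∧
    Nonempty (graphOfEdges (p.1 : Set (Sym2 γ)) ≃g G') ∧
    Nonempty (graphOfEdges (p.2 : Set (Sym2 γ)) ≃g G'')}

theorem noIsolated_graphOfEdges {β : Type*} (E : Set (Sym2 β)) :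
    NoIsolated (graphOfEdges E) := by
  rintro ⟨v, hv⟩
  obtain ⟨w, h⟩ := (mem_support _).1 hv
  exact ⟨⟨w, (mem_support _).2 ⟨v, h.symm⟩⟩, h⟩

theorem NoIsolated.of_iso {α β : Type*} {G : SimpleGraph α} {H : SimpleGraph β}
    (hG : NoIsolated G) (e : G ≃g H) : NoIsolated H := by
  intro v
  obtain ⟨w, hw⟩ := hG (e.symm v)
  refine ⟨e w, ?_⟩
  have := e.map_adj_iff.2 hw
  simpa using this

theorem fromEdgeSet_image {γ β : Type*} (f : γ ↪ β) (E : Set (Sym2 γ)) :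
    fromEdgeSet (Sym2.map f '' E) = (fromEdgeSet E).map f := by
  ext a b
  simp only [fromEdgeSet_adj, map_adj, Set.mem_image]
  constructor
  · rintro ⟨⟨e, he, hab⟩, hne⟩
    induction e using Sym2.ind with
    | _ x y =>
      rw [Sym2.map_mk, Sym2.eq_iff] at hab
      rcases hab with ⟨rfl, rfl⟩ | ⟨rfl, rfl⟩
      · exact ⟨x, y, ⟨he, fun h => hne (by rw [h])⟩, rfl, rfl⟩
      · exact ⟨y, x, ⟨Sym2.eq_swap ▸ he, fun h => hne (by rw [h])⟩, rfl, rfl⟩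
  · rintro ⟨x, y, ⟨he, hne⟩, rfl, rfl⟩
    exact ⟨⟨s(x, y), he, rfl⟩, f.injective.ne hne⟩

theorem graphOfEdges_image_iso {γ β : Type*} (f : γ ↪ β) (E : Set (Sym2 γ)) :
    Nonempty (graphOfEdges E ≃g graphOfEdges (Sym2.map f '' E)) := by
  have hadj : ∀ x y, (fromEdgeSet (Sym2.map f '' E)).Adj (f x) (f y) ↔
      (fromEdgeSet E).Adj x y := by
    intro x y
    rw [fromEdgeSet_image, map_adj_apply]
  let g : (fromEdgeSet E).support → (fromEdgeSet (Sym2.map f '' E)).support :=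
    fun v => ⟨f v, by
      obtain ⟨v, w, h⟩ := v
      exact ⟨f w, (hadj _ _).2 h⟩⟩
  have hg : Function.Bijective g := by
    constructor
    · intro v w h
      exact Subtype.ext (f.injective (congrArg Subtype.val h))
    · rintro ⟨v, hv⟩
      obtain ⟨w, hw⟩ := (mem_support _).1 hv
      rw [fromEdgeSet_image, map_adj] at hw
      obtain ⟨x, y, h, rfl, rfl⟩ := hw
      exact ⟨⟨x, y, h⟩, rfl⟩
  exact ⟨⟨Equiv.ofBijective g hg, fun {a b} => hadj a b⟩⟩

theorem coe_map_sym2Map {γ β : Type*} (f : γ ↪ β) (A : Finset (Sym2 γ)) :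
    ((A.map f.sym2Map : Finset (Sym2 β)) : Set (Sym2 β)) =
      Sym2.map f '' (A : Set (Sym2 γ)) := by
  rw [Finset.coe_map]
  rfl

theorem nonempty_iso_map_iff {γ β δ : Type*} (f : γ ↪ β) (G : SimpleGraph δ)
    (A : Finset (Sym2 γ)) :
    Nonempty (graphOfEdges ((A.map f.sym2Map : Finset (Sym2 β)) : Set (Sym2 β)) ≃g G) ↔
      Nonempty (graphOfEdges (A : Set (Sym2 γ)) ≃g G) := by
  rw [coe_map_sym2Map]
  obtain ⟨e⟩ := graphOfEdges_image_iso f (A : Set (Sym2 γ))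
  exact ⟨fun ⟨h⟩ => ⟨e.trans h⟩, fun ⟨h⟩ => ⟨e.symm.trans h⟩⟩

theorem pairCount_image {α α' γ β : Type*} (G' : SimpleGraph α) (G'' : SimpleGraph α')
    (f : γ ↪ β) (E : Set (Sym2 γ)) :
    pairCount G' G'' (Sym2.map f '' E) = pairCount G' G'' E := by
  have hinj : Function.Injective (Sym2.map f) := f.sym2Map.injective
  symm
  refine Nat.card_congr (Equiv.ofBijective (fun p => ⟨(p.1.1.map f.sym2Map,
    p.1.2.map f.sym2Map), ?_, ?_, ?_⟩) ⟨?_, ?_⟩)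
  · simp only [coe_map_sym2Map, ← Set.image_union, p.2.1]
  · exact (nonempty_iso_map_iff f G' _).2 p.2.2.1
  · exact (nonempty_iso_map_iff f G'' _).2 p.2.2.2
  · rintro ⟨⟨A, B⟩, _⟩ ⟨⟨A', B'⟩, _⟩ h
    simpa using h
  · rintro ⟨⟨A, B⟩, hU, hA, hB⟩
    -- Both parts lie in the image of `E`, so they are images of subsets of `E`.
    have hlift : ∀ C : Finset (Sym2 β), (C : Set (Sym2 β)) ⊆ Sym2.map f '' E →
        ∃ D : Finset (Sym2 γ), D.map f.sym2Map = C := by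
      intro C hC
      refine ⟨C.preimage (Sym2.map f) hinj.injOn, Finset.coe_injective ?_⟩
      rw [coe_map_sym2Map, Finset.coe_preimage, Set.image_preimage_eq_iff]
      exact hC.trans (Set.image_subset_range _ _)
    obtain ⟨A, rfl⟩ := hlift A (hU ▸ Set.subset_union_left)
    obtain ⟨B, rfl⟩ := hlift B (hU ▸ Set.subset_union_right)
    refine ⟨⟨(A, B), ?_, (nonempty_iso_map_iff f G' A).1 hA,
      (nonempty_iso_map_iff f G'' B).1 hB⟩, rfl⟩
    simp only [coe_map_sym2Map, ← Set.image_union] at hU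
    exact hinj.image_injective hU

/-- If `E` spans a copy of `G`, then `E` is the image of the edge set of `G` under an injection of
vertices. -/
theorem exists_embedding_of_iso {γ β : Type*} {G : SimpleGraph γ} {H : SimpleGraph β}
    {E : Set (Sym2 β)} (hE : E ⊆ H.edgeSet) (e : graphOfEdges E ≃g G) :
    ∃ f : γ ↪ β, Sym2.map f '' G.edgeSet = E := by
  refine ⟨⟨fun v => (e.symm v : β), fun a b h => e.symm.injective (Subtype.ext h)⟩, ?_⟩
  ext z
  constructor
  · rintro ⟨z, hz, rfl⟩
    induction z using Sym2.ind with
    | _ x y =>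
      have h : (graphOfEdges E).Adj (e.symm x) (e.symm y) := e.symm.map_adj_iff.2 hz
      exact h.1
  · intro hz
    induction z using Sym2.ind with
    | _ x y =>
      have hadj : (fromEdgeSet E).Adj x y := ⟨hz, (hE hz : H.Adj x y).ne⟩
      refine ⟨s(e ⟨x, y, hadj⟩, e ⟨y, x, hadj.symm⟩), ?_, ?_⟩
      · exact e.map_adj_iff.2 hadj
      · change s((e.symm (e _) : β), (e.symm (e _) : β)) = s(x, y)
        simp only [RelIso.symm_apply_apply]

theorem pairCount_eq_of_iso {α α' γ β : Type*} (G' : SimpleGraph α) (G'' : SimpleGraph α')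
    {G : SimpleGraph γ} {H : SimpleGraph β} {E : Set (Sym2 β)} (hE : E ⊆ H.edgeSet)
    (e : graphOfEdges E ≃g G) : pairCount G' G'' E = pairCount G' G'' G.edgeSet := by
  obtain ⟨f, rfl⟩ := exists_embedding_of_iso hE e
  exact pairCount_image G' G'' f _

theorem card_support_le {α α' β : Type*} [Fintype α] [Fintype α'] [Finite β]
    {G' : SimpleGraph α} {G'' : SimpleGraph α'} {A B : Set (Sym2 β)}
    (eA : graphOfEdges A ≃g G') (eB : graphOfEdges B ≃g G'') :
    Nat.card (fromEdgeSet (A ∪ B)).support ≤ Fintype.card α + Fintype.card α' := by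
  have hsub : (fromEdgeSet (A ∪ B)).support ⊆
      (fromEdgeSet A).support ∪ (fromEdgeSet B).support := by
    rintro v ⟨w, h, hne⟩
    rcases h with h | h
    · exact Or.inl ⟨w, h, hne⟩
    · exact Or.inr ⟨w, h, hne⟩
  calc Nat.card (fromEdgeSet (A ∪ B)).support
      ≤ ((fromEdgeSet A).support ∪ (fromEdgeSet B).support).ncard :=
        Set.ncard_le_ncard hsub (Set.toFinite _)
    _ ≤ (fromEdgeSet A).support.ncard + (fromEdgeSet B).support.ncard := Set.ncard_union_le _ _
    _ = Fintype.card α + Fintype.card α' := by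
        rw [← Nat.card_eq_fintype_card, ← Nat.card_eq_fintype_card,
          ← Nat.card_congr eA.toEquiv, ← Nat.card_congr eB.toEquiv]
        rfl

/-- There is a finite list of pairwise non-isomorphic graphs without isolated vertices that
represents every graph without isolated vertices on at most `n` vertices. -/
theorem exists_representatives (n : ℕ) :
    ∃ (m : ℕ) (k : Fin m → ℕ) (Gs : ∀ i, SimpleGraph (Fin (k i))),
      (∀ i, NoIsolated (Gs i)) ∧
      (∀ i j, i ≠ j → IsEmpty (Gs i ≃g Gs j)) ∧
      ∀ (γ : Type*) [Finite γ] (G : SimpleGraph γ), NoIsolated G → Nat.card γ ≤ n →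
        ∃ i, Nonempty (G ≃g Gs i) := by
  let T := {p : Σ k : Fin (n + 1), SimpleGraph (Fin k) // NoIsolated p.2}
  let r : Setoid T :=
    { r := fun p q => Nonempty (p.1.2 ≃g q.1.2)
      iseqv := ⟨fun _ => ⟨Iso.refl⟩, fun ⟨e⟩ => ⟨e.symm⟩, fun ⟨e⟩ ⟨e'⟩ => ⟨e.trans e'⟩⟩ }
  let e : Quotient r ≃ Fin (Nat.card (Quotient r)) := Finite.equivFin _
  refine ⟨_, fun i => (e.symm i).out.1.1, fun i => (e.symm i).out.1.2,
    fun i => (e.symm i).out.2, ?_, ?_⟩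
  · intro i j hij
    refine ⟨fun f => hij (e.symm.injective ?_)⟩
    exact Quotient.out_equiv_out.1 (⟨f⟩ : Nonempty _)
  · intro γ _ G hG hn
    let g : G ≃g G.map (Finite.equivFin γ).toEmbedding := Iso.map _ G
    let t : T := ⟨⟨⟨Nat.card γ, Nat.lt_succ_of_le hn⟩, G.map (Finite.equivFin γ).toEmbedding⟩,
      hG.of_iso g⟩
    refine ⟨e ⟦t⟧, ?_⟩
    obtain ⟨f⟩ : Nonempty (t.1.2 ≃g (e.symm (e ⟦t⟧)).out.1.2) := by
      rw [e.symm_apply_apply]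
      exact Setoid.symm' r (Quotient.mk_out t)
    exact ⟨g.trans f⟩

open Classical in
theorem countCopies_eq_card {α β : Type*} [Fintype β] (G : SimpleGraph α) (H : SimpleGraph β) :
    countCopies G H = (H.edgeFinset.powerset.filter
      fun E : Finset (Sym2 β) => Nonempty (graphOfEdges (E : Set (Sym2 β)) ≃g G)).card := by
  refine Nat.subtype_card _ fun E => ?_
  rw [Finset.mem_filter, Finset.mem_powerset, ← Finset.coe_subset, coe_edgeFinset]

open Classical in
/-- Pairs of copies in `H`, grouped by their union. -/
theorem countCopies_mul_eq_sum {α α' β : Type*} [Fintype β] (G' : SimpleGraph α)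
    (G'' : SimpleGraph α') (H : SimpleGraph β) :
    countCopies G' H * countCopies G'' H =
      ∑ E ∈ H.edgeFinset.powerset, pairCount G' G'' (SetLike.coe E : Set (Sym2 β)) := by
  rw [countCopies_eq_card, countCopies_eq_card, ← Finset.card_product,
    Finset.card_eq_sum_card_fiberwise (f := fun p => p.1 ∪ p.2) (t := H.edgeFinset.powerset)]
  · refine Finset.sum_congr rfl fun E hE => ?_
    symm
    refine Nat.subtype_card _ fun p => ?_
    rw [← Finset.coe_union, Finset.coe_inj]
    simp only [Finset.mem_filter, Finset.mem_product, Finset.mem_powerset] at hE ⊢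
    constructor
    · rintro ⟨⟨⟨-, h₁⟩, -, h₂⟩, h⟩
      exact ⟨h, h₁, h₂⟩
    · rintro ⟨rfl, h₁, h₂⟩
      exact ⟨⟨⟨Finset.subset_union_left.trans hE, h₁⟩,
        Finset.subset_union_right.trans hE, h₂⟩, rfl⟩
  · intro p hp
    simp only [Finset.coe_product, Set.mem_prod, Finset.mem_coe, Finset.mem_filter,
      Finset.mem_powerset] at hp ⊢
    exact Finset.union_subset hp.1.1 hp.2.1

/-- The product of two subgraph-counting functions is a nonnegative integer combination of
subgraph-counting functions of pairwise non-isomorphic graphs without isolated vertices. -/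
theorem countCopies_mul_countCopies {α α' : Type*} [Fintype α] [Fintype α']
    (G' : SimpleGraph α) (G'' : SimpleGraph α')
    (h' : NoIsolated G') (h'' : NoIsolated G'') :
    ∃ (m : ℕ) (k : Fin m → ℕ) (Gs : ∀ i, SimpleGraph (Fin (k i))) (c : Fin m → ℕ),
      (∀ i, NoIsolated (Gs i)) ∧
      (∀ i j, i ≠ j → IsEmpty (Gs i ≃g Gs j)) ∧
      ∀ (β : Type*) [Fintype β] (H : SimpleGraph β),
        countCopies G' H * countCopies G'' H = ∑ i, c i * countCopies (Gs i) H := by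
  classical
  obtain ⟨m, k, Gs, hGs, hne, hrep⟩ :=
    exists_representatives (Fintype.card α + Fintype.card α')
  refine ⟨m, k, Gs, fun i => pairCount G' G'' (Gs i).edgeSet, hGs, hne, ?_⟩
  intro β _ H
  rw [countCopies_mul_eq_sum]
  simp only [countCopies_eq_card, Finset.card_filter, Finset.mul_sum]
  rw [Finset.sum_comm]
  refine Finset.sum_congr rfl fun E hE => ?_
  have hE' : (E : Set (Sym2 β)) ⊆ H.edgeSet := by
    rw [Finset.mem_powerset, ← Finset.coe_subset, coe_edgeFinset] at hE
    exact hE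
  by_cases hi : ∃ i, Nonempty (graphOfEdges (E : Set (Sym2 β)) ≃g Gs i)
  · obtain ⟨i, ⟨e⟩⟩ := hi
    rw [Finset.sum_eq_single i, if_pos ⟨e⟩, mul_one]
    · exact pairCount_eq_of_iso G' G'' hE' e
    · intro j _ hj
      rw [if_neg, mul_zero]
      rintro ⟨f⟩
      exact (hne j i hj).false (f.symm.trans e)
    · simp
  -- A decomposition of `E` would bound its number of vertices, giving a representative.
  · rw [Finset.sum_eq_zero fun i _ => by rw [if_neg fun h => hi ⟨i, h⟩, mul_zero]]
    refine Nat.card_eq_zero.2 (Or.inl ⟨?_⟩)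
    rintro ⟨⟨A, B⟩, hU, ⟨eA⟩, ⟨eB⟩⟩
    refine hi (hrep _ _ (noIsolated_graphOfEdges _) ?_)
    rw [← hU]
    exact card_support_le eA eB
end

section
/- Let G₁, …, G_k be pairwise non-isomorphic finite simple graphs without isolated vertices and let a₁, …, a_k be rational numbers. If Σ_{i=1}^{k} aᵢ · N_{Gᵢ}(H) = 0 for every finite simple graph H, then a₁ = ⋯ = a_k = 0. In other words, the counting functions H ↦ N_G(H), for G ranging over isomorphism classes of graphs without isolated vertices, are linearly independent over ℚ. -/
/-!
Suppose some coefficient is nonzero, and among the indices with `a i ≠ 0` pick one for which `G i`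
has the fewest edges. Evaluate the relation at `H = G i`, moved to the vertex set `Fin n`.
If `a j ≠ 0` and `H` contains a copy of `G j`, that copy has at least as many edges as `H`, so it is all of `H`
(`iso_of_countCopies_ne_zero`, which rests on the edge count `ncard_edgeSet_graphOfEdges`).
As `H` has no isolated vertices, it is recovered from its edge set
(`nonempty_graphOfEdges_edgeSet_iso`); hence `G j ≃g H ≃g G i` and `j = i`. The relation becomes
`a i * N_{G i}(H) = 0`, where the count is nonzero because the full edge set of `H` is a copy
of `G i`, contradicting `a i ≠ 0`.
-/

open SimpleGraph

/-- A graph without isolated vertices is the graph determined by its edge set. -/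
lemma nonempty_graphOfEdges_edgeSet_iso {β : Type*} (H : SimpleGraph β) (hH : NoIsolated H) :
    Nonempty (graphOfEdges H.edgeSet ≃g H) := by
  unfold graphOfEdges
  rw [fromEdgeSet_edgeSet]
  have hs : H.support = Set.univ := Set.eq_univ_of_forall fun v => (mem_support H).2 (hH v)
  rw [hs]
  exact ⟨induceUnivIso H⟩

/-- Loops in `E` would be discarded by `fromEdgeSet`; the hypothesis `hE` excludes them. -/
lemma ncard_edgeSet_graphOfEdges {β : Type*} (H : SimpleGraph β) (E : Set (Sym2 β))
    (hE : E ⊆ H.edgeSet) : (graphOfEdges E).edgeSet.ncard = E.ncard := by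
  let f := Function.Embedding.subtype (· ∈ (fromEdgeSet E).support)
  have hmap : (graphOfEdges E).map f = fromEdgeSet E := by
    ext x y
    rw [map_adj]
    constructor
    · rintro ⟨u, v, huv, rfl, rfl⟩
      exact huv
    · intro hxy
      exact ⟨⟨x, (mem_support _).2 ⟨y, hxy⟩⟩, ⟨y, (mem_support _).2 ⟨x, hxy.symm⟩⟩, hxy, rfl, rfl⟩
  have hedge : (fromEdgeSet E).edgeSet = E := by
    rw [edgeSet_fromEdgeSet, sdiff_eq_left, Set.disjoint_left]
    exact fun e he hd => H.not_isDiag_of_mem_edgeSet (hE he) hd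
  have himage : f.sym2Map '' (graphOfEdges E).edgeSet = E := by
    rw [← edgeSet_map, hmap, hedge]
  rw [← Set.ncard_image_of_injective _ f.sym2Map.injective, himage]

lemma ncard_edgeSet_eq_of_iso {α β : Type*} {G : SimpleGraph α} {H : SimpleGraph β}
    (e : G ≃g H) : G.edgeSet.ncard = H.edgeSet.ncard :=
  Nat.card_congr e.mapEdgeSet

/-- A copy of `G` in `H` uses every edge of `H` as soon as `G` has at least as many edges. -/
lemma iso_of_countCopies_ne_zero {α β : Type*} [Finite β] {G : SimpleGraph α}
    {H : SimpleGraph β} (hH : NoIsolated H) (hle : H.edgeSet.ncard ≤ G.edgeSet.ncard)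
    (hc : countCopies G H ≠ 0) : Nonempty (H ≃g G) := by
  obtain ⟨⟨E, hE, ⟨e⟩⟩⟩ := (Nat.card_ne_zero.1 hc).1
  have hcard : (E : Set (Sym2 β)).ncard = G.edgeSet.ncard := by
    rw [← ncard_edgeSet_graphOfEdges H _ hE, ncard_edgeSet_eq_of_iso e]
  have hEH : (E : Set (Sym2 β)) = H.edgeSet :=
    Set.eq_of_subset_of_ncard_le hE (hcard ▸ hle) (Set.toFinite _)
  rw [hEH] at e
  obtain ⟨e'⟩ := nonempty_graphOfEdges_edgeSet_iso H hH
  exact ⟨e'.symm.trans e⟩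

lemma countCopies_ne_zero_of_iso {α β : Type*} [Finite β] {G : SimpleGraph α}
    {H : SimpleGraph β} (hH : NoIsolated H) (e : H ≃g G) : countCopies G H ≠ 0 := by
  obtain ⟨e'⟩ := nonempty_graphOfEdges_edgeSet_iso H hH
  have hfin : ((Set.toFinite H.edgeSet).toFinset : Set (Sym2 β)) = H.edgeSet :=
    Set.Finite.coe_toFinset _
  refine Nat.card_ne_zero.2 ⟨⟨⟨(Set.toFinite H.edgeSet).toFinset, hfin.subset, ?_⟩⟩, ?_⟩
  · rw [hfin]
    exact ⟨e'.trans e⟩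
  · have := Fintype.ofFinite β
    infer_instance

/-- The counting functions of pairwise non-isomorphic graphs without isolated vertices are
linearly independent over `ℚ`. -/
theorem countCopies_linearIndependent (k : ℕ) {V : Fin k → Type*} [∀ i, Fintype (V i)]
    (G : ∀ i, SimpleGraph (V i))
    (hiso : ∀ i, NoIsolated (G i))
    (hpair : ∀ i j, i ≠ j → IsEmpty (G i ≃g G j))
    (a : Fin k → ℚ)
    (h : ∀ (β : Type) [Fintype β] (H : SimpleGraph β),
      ∑ i, a i * (countCopies (G i) H : ℚ) = 0) :
    ∀ i, a i = 0 := by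
  by_contra! hne
  classical
  obtain ⟨i, hi, hmin⟩ := Finset.exists_min_image
    (Finset.univ.filter fun i => a i ≠ 0) (fun i => (G i).edgeSet.ncard)
    (by obtain ⟨i, hi⟩ := hne; exact ⟨i, by simpa using hi⟩)
  have hai : a i ≠ 0 := by simpa using hi
  let H := (G i).overFin rfl
  let e : G i ≃g H := (G i).overFinIso rfl
  have hH : NoIsolated H := fun v => by
    obtain ⟨w, hw⟩ := hiso i (e.symm v)
    exact ⟨e w, by simpa using e.map_adj_iff.2 hw⟩
  have hsum := h _ H
  rw [Finset.sum_eq_single i] at hsum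
  · have hc : (countCopies (G i) H : ℚ) ≠ 0 :=
      Nat.cast_ne_zero.2 (countCopies_ne_zero_of_iso hH e.symm)
    exact mul_ne_zero hai hc hsum
  · intro j _ hji
    by_contra hj
    obtain ⟨haj, hc⟩ := mul_ne_zero_iff.1 hj
    have hle : H.edgeSet.ncard ≤ (G j).edgeSet.ncard := by
      rw [← ncard_edgeSet_eq_of_iso e]
      exact hmin j (by simpa using haj)
    obtain ⟨e'⟩ := iso_of_countCopies_ne_zero hH hle (Nat.cast_ne_zero.1 hc)
    exact (hpair i j hji.symm).false (e.trans e')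
  · simp
end

section
/- For every finite simple graph G without isolated vertices, there exist finitely many connected finite simple graphs C₁, …, C_k and a polynomial p ∈ ℚ[X₁, …, X_k] such that for every finite simple graph H, N_G(H) = p(N_{C₁}(H), …, N_{C_k}(H)). In other words, the counting functions of connected graphs generate all counting functions of graphs without isolated vertices as a ℚ-algebra. -/
/-!
Write `hom(G, H)` and `inj(G, H)` for the numbers of homomorphisms and of injective homomorphisms,
and consider all counts as functions of `H`. For `G` without isolated vertices,
`inj(G, H) = |Aut G| * N_G(H)` (`injN_eq`), so it suffices to express `inj(G, ·)` through the counting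
functions of connected graphs. Two identities do this.

* Sorting homomorphisms by their kernel, `hom(G, H) = ∑ inj(G / r, H)`, the sum being over the
  equivalence relations `r` on the vertices that identify no adjacent pair (`homN_eq`).
* `hom(G, H) = ∏ hom(c, H)` over the connected components `c` of `G` (`homN_eq_prod`).

If `G` is connected then so are its quotients, so the first identity puts `hom(G, ·)` in the algebra
generated by connected counting functions, and the second extends this to all `G`. In the first
identity the trivial relation contributes `inj(G, ·)` and all other quotients have fewer vertices, so
induction on the number of vertices puts `inj(G, ·)` in the algebra as well (`injFun_mem`). Quotients
and components inherit the absence of isolated vertices, which is needed because an isolated vertex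
is not seen by edge sets.
-/

open SimpleGraph

open Function

/-! ### Copies and injective homomorphisms -/

/-- The number of graph homomorphisms from `G` to `H`. -/
noncomputable def homN {α β : Type*} (G : SimpleGraph α) (H : SimpleGraph β) : ℕ :=
  Nat.card (G →g H)

/-- The number of injective graph homomorphisms from `G` to `H`. -/
noncomputable def injN {α β : Type*} (G : SimpleGraph α) (H : SimpleGraph β) : ℕ :=
  Nat.card {f : G →g H // Injective f}

theorem mem_support_fromEdgeSet_of {α β : Type*} {G : SimpleGraph α} {H : SimpleGraph β}
    (h : NoIsolated G) (f : G →g H) (E : Set (Sym2 β)) (hE : Sym2.map f '' G.edgeSet = E) (v : α) :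
    f v ∈ (fromEdgeSet E).support := by
  obtain ⟨w, hw⟩ := h v
  refine ⟨f w, ?_⟩
  change (fromEdgeSet E).Adj (f v) (f w)
  rw [fromEdgeSet_adj, ← hE]
  exact ⟨⟨s(v, w), hw, rfl⟩, (f.map_adj hw).ne⟩

/-- An injective homomorphism is an isomorphism onto the graph formed by the image of the edge set;
every vertex of `G` is hit by this graph because none is isolated. -/
noncomputable def isoOfInj {α β : Type*} {G : SimpleGraph α} {H : SimpleGraph β}
    (h : NoIsolated G) (f : G →g H) (hf : Injective f) (E : Set (Sym2 β))
    (hE : Sym2.map f '' G.edgeSet = E) : G ≃g graphOfEdges E where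
  toEquiv := Equiv.ofBijective
    (fun v => ⟨f v, mem_support_fromEdgeSet_of h f E hE v⟩) (by
      constructor
      · intro a b hab
        exact hf (congrArg Subtype.val hab)
      · rintro ⟨x, y, hxy⟩
        change (fromEdgeSet E).Adj x y at hxy
        rw [fromEdgeSet_adj, ← hE] at hxy
        obtain ⟨⟨z, hz, hzx⟩, -⟩ := hxy
        induction z with
        | _ a b =>
          simp only [Sym2.map_mk, Sym2.eq_iff] at hzx
          rcases hzx with ⟨rfl, -⟩ | ⟨-, rfl⟩
          · exact ⟨a, rfl⟩
          · exact ⟨b, rfl⟩)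
  map_rel_iff' := by
    intro a b
    change (fromEdgeSet E).Adj (f a) (f b) ↔ G.Adj a b
    rw [fromEdgeSet_adj, ← hE]
    constructor
    · rintro ⟨⟨z, hz, hzx⟩, -⟩
      rw [show s(f a, f b) = Sym2.map f s(a, b) from rfl] at hzx
      rw [Sym2.map.injective hf hzx] at hz
      exact hz
    · intro hab
      exact ⟨⟨s(a, b), hab, rfl⟩, (f.map_adj hab).ne⟩

/-- An isomorphism onto the graph of a set `E` of edges of `H`, read as a homomorphism to `H`. -/
noncomputable def homOfIso {α β : Type*} {G : SimpleGraph α} {H : SimpleGraph β}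
    (E : Set (Sym2 β)) (hEH : E ⊆ H.edgeSet) (e : G ≃g graphOfEdges E) : G →g H where
  toFun v := (e v).1
  map_rel' := by
    intro a b hab
    have : (fromEdgeSet E).Adj (e a).1 (e b).1 := e.map_adj_iff.2 hab
    exact hEH ((fromEdgeSet_adj _).1 this).1

theorem homOfIso_image {α β : Type*} {G : SimpleGraph α} {H : SimpleGraph β}
    (E : Set (Sym2 β)) (hEH : E ⊆ H.edgeSet) (e : G ≃g graphOfEdges E) :
    Sym2.map (homOfIso E hEH e) '' G.edgeSet = E := by
  ext x
  constructor
  · rintro ⟨z, hz, rfl⟩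
    induction z with
    | _ a b =>
      have : (fromEdgeSet E).Adj (e a).1 (e b).1 := e.map_adj_iff.2 hz
      exact ((fromEdgeSet_adj _).1 this).1
  · intro hx
    induction x with
    | _ x y =>
      have hxy : (fromEdgeSet E).Adj x y :=
        (fromEdgeSet_adj _).2 ⟨hx, (show H.Adj x y from hEH hx).ne⟩
      obtain ⟨a, ha⟩ := e.surjective ⟨x, y, hxy⟩
      obtain ⟨b, hb⟩ := e.surjective ⟨y, x, hxy.symm⟩
      refine ⟨s(a, b), ?_, ?_⟩
      · refine e.map_adj_iff.1 ?_
        rw [ha, hb]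
        exact hxy
      · change s((e a).1, (e b).1) = _
        rw [ha, hb]

/-- The injective homomorphisms `G → H` whose image has edge set `E` are the isomorphisms from `G`
onto the graph of `E`. -/
noncomputable def fiberEquivIso {α β : Type*} {G : SimpleGraph α} {H : SimpleGraph β}
    (h : NoIsolated G) (E : Set (Sym2 β)) (hEH : E ⊆ H.edgeSet) :
    {f : {f : G →g H // Injective f} // Sym2.map f.1 '' G.edgeSet = E} ≃
      (G ≃g graphOfEdges E) where
  toFun f := isoOfInj h f.1.1 f.1.2 E f.2
  invFun e := ⟨⟨homOfIso E hEH e, fun _ _ hab => e.injective (Subtype.ext hab)⟩,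
    homOfIso_image E hEH e⟩
  left_inv f := rfl
  right_inv e := by ext; rfl

instance finite_hom {α β : Type*} [Finite α] [Finite β] (G : SimpleGraph α) (H : SimpleGraph β) :
    Finite (G →g H) := DFunLike.finite _

/-- Sorting injective homomorphisms by the edge set of their image, every fibre is a torsor under
the automorphism group of `G`. -/
theorem injN_eq {α β : Type*} [Finite α] [Finite β] (G : SimpleGraph α) (H : SimpleGraph β)
    (h : NoIsolated G) : injN G H = Nat.card (G ≃g G) * countCopies G H := by
  classical
  let S := {E : Finset (Sym2 β) // ↑E ⊆ H.edgeSet ∧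
    Nonempty (graphOfEdges (E : Set (Sym2 β)) ≃g G)}
  have : Finite S := inferInstance
  have := Fintype.ofFinite S
  let F : {f : G →g H // Injective f} → S := fun f =>
    ⟨(Set.toFinite (Sym2.map f.1 '' G.edgeSet)).toFinset, by
      rw [Set.Finite.coe_toFinset]
      refine ⟨?_, ⟨(isoOfInj h f.1 f.2 _ rfl).symm⟩⟩
      rintro _ ⟨z, hz, rfl⟩
      induction z with
      | _ a b => exact f.1.map_adj hz⟩
  have hF : ∀ f E, F f = E ↔ Sym2.map f.1 '' G.edgeSet = (E.1 : Set (Sym2 β)) := by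
    intro f E
    rw [Subtype.ext_iff, ← Finset.coe_inj, Set.Finite.coe_toFinset]
  have hcard : ∀ E : S, Nat.card {f // F f = E} = Nat.card (G ≃g G) := by
    intro E
    obtain ⟨e⟩ := E.2.2
    refine Nat.card_congr (((Equiv.subtypeEquivRight fun f => hF f E).trans
      (fiberEquivIso h (E.1 : Set (Sym2 β)) E.2.1)).trans ?_)
    exact ⟨fun g => g.trans e, fun g => g.trans e.symm, fun g => by ext; simp,
      fun g => by ext; simp⟩
  rw [injN, ← Nat.card_congr (Equiv.sigmaFiberEquiv F), Nat.card_sigma]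
  simp only [hcard, Finset.sum_const, smul_eq_mul, Finset.card_univ, countCopies]
  rw [mul_comm, Nat.card_eq_fintype_card (α := S)]

/-! ### Homomorphisms sorted by their kernel -/

/-- The quotient of `G` by an equivalence relation on its vertices. Loops, which arise when adjacent
vertices are identified, are discarded. -/
def quotGraph {α : Type*} (G : SimpleGraph α) (r : Setoid α) : SimpleGraph (Quotient r) where
  Adj x y := x ≠ y ∧ ∃ a b, G.Adj a b ∧ (⟦a⟧ : Quotient r) = x ∧ (⟦b⟧ : Quotient r) = y
  symm := ⟨by
    rintro x y ⟨hne, a, b, hab, rfl, rfl⟩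
    exact ⟨hne.symm, b, a, hab.symm, rfl, rfl⟩⟩
  loopless := ⟨fun x hx => hx.1 rfl⟩

/-- No two adjacent vertices are identified by `r`, so that passing to the quotient creates no
loops. -/
def Proper {α : Type*} (G : SimpleGraph α) (r : Setoid α) : Prop :=
  ∀ a b, G.Adj a b → ¬ r a b

/-- The quotient map of a proper equivalence relation. -/
def Proper.hom {α : Type*} {G : SimpleGraph α} {r : Setoid α} (hr : Proper G r) :
    G →g quotGraph G r where
  toFun a := ⟦a⟧
  map_rel' {a b} hab := ⟨fun he => hr a b hab (Quotient.exact he), a, b, hab, rfl, rfl⟩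

theorem Proper.noIsolated {α : Type*} {G : SimpleGraph α} {r : Setoid α} (hr : Proper G r)
    (h : NoIsolated G) : NoIsolated (quotGraph G r) := by
  intro x
  induction x using Quotient.inductionOn with
  | _ a =>
    obtain ⟨b, hb⟩ := h a
    exact ⟨_, hr.hom.map_adj hb⟩

theorem Proper.connected {α : Type*} {G : SimpleGraph α} {r : Setoid α} (hr : Proper G r)
    (h : G.Connected) : (quotGraph G r).Connected := by
  exact h.map hr.hom Quotient.mk_surjective

/-- Homomorphisms with kernel `r` are the injective homomorphisms from the quotient by `r`. -/
def kerFiberEquiv {α β : Type*} {G : SimpleGraph α} (H : SimpleGraph β) {r : Setoid α}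
    (hr : Proper G r) :
    {f : G →g H // Setoid.ker f = r} ≃ {f : quotGraph G r →g H // Injective f} where
  toFun f := ⟨⟨Quotient.lift f.1 (fun a b hab => by
      have := f.2
      rw [← this] at hab
      exact hab), by
        rintro _ _ ⟨-, a, b, hab, rfl, rfl⟩
        exact f.1.map_adj hab⟩, by
      intro x y
      induction x using Quotient.inductionOn with
      | _ a =>
      induction y using Quotient.inductionOn with
      | _ b =>
      intro hab
      refine Quotient.sound ?_
      change r a b
      rw [← f.2]
      exact hab⟩
  invFun g := ⟨g.1.comp hr.hom, by
    ext a b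
    change g.1 ⟦a⟧ = g.1 ⟦b⟧ ↔ r a b
    rw [g.2.eq_iff]
    exact Quotient.eq⟩
  left_inv f := rfl
  right_inv g := by
    ext x
    induction x using Quotient.inductionOn with
    | _ a => rfl

theorem homN_eq {α β : Type*} [Finite α] [Finite β] (G : SimpleGraph α) (H : SimpleGraph β)
    [Fintype {r : Setoid α // Proper G r}] :
    homN G H = ∑ r : {r : Setoid α // Proper G r}, injN (quotGraph G r.1) H := by
  let F : (G →g H) → {r : Setoid α // Proper G r} := fun f =>
    ⟨Setoid.ker f, fun a b hab he => (f.map_adj hab).ne he⟩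
  rw [homN, ← Nat.card_congr (Equiv.sigmaFiberEquiv F), Nat.card_sigma]
  refine Finset.sum_congr rfl fun r _ => ?_
  exact Nat.card_congr ((Equiv.subtypeEquivRight fun f => Subtype.ext_iff).trans
    (kerFiberEquiv H r.2))

theorem injN_quot_bot {α β : Type*} (G : SimpleGraph α) (H : SimpleGraph β)
    (hr : Proper G ⊥) : injN (quotGraph G ⊥) H = injN G H := by
  refine Nat.card_congr ((kerFiberEquiv H hr).symm.trans (Equiv.subtypeEquivRight fun f => ?_))
  exact (Setoid.injective_iff_ker_bot f).symm

/-- A homomorphism amounts to an independent choice of a homomorphism on each component. -/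
theorem homN_eq_prod {α β : Type*} [Finite α] [Finite β] (G : SimpleGraph α) (H : SimpleGraph β)
    [Fintype G.ConnectedComponent] :
    homN G H = ∏ c : G.ConnectedComponent, homN c.toSimpleGraph H := by
  simp only [homN]
  rw [← Nat.card_pi]
  refine Nat.card_congr ⟨fun f c => f.comp c.toSimpleGraph_hom,
    fun C => homOfConnectedComponents G C, fun f => ?_, fun C => ?_⟩
  · ext v; rfl
  · funext c
    ext ⟨v, hv⟩
    obtain rfl := hv
    rfl

theorem noIsolated_component {α : Type*} {G : SimpleGraph α} (h : NoIsolated G)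
    (c : G.ConnectedComponent) : NoIsolated c.toSimpleGraph := by
  rintro ⟨v, hv⟩
  obtain ⟨w, hw⟩ := h v
  refine ⟨⟨w, ?_⟩, hw⟩
  exact c.mem_supp_of_adj_mem_supp hv hw

theorem countCopies_congr {α α' β : Type*} {G : SimpleGraph α} {G' : SimpleGraph α'}
    (e : G ≃g G') (H : SimpleGraph β) : countCopies G H = countCopies G' H := by
  refine Nat.card_congr (Equiv.subtypeEquivRight fun E => and_congr_right fun _ => ?_)
  exact ⟨fun ⟨g⟩ => ⟨g.trans e⟩, fun ⟨g⟩ => ⟨g.trans e.symm⟩⟩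

/-! ### The algebra generated by connected counting functions -/

universe u v

/-- A finite simple graph bundled with its vertex type. -/
structure FinGraph where
  V : Type v
  [fin : Finite V]
  graph : SimpleGraph V

attribute [instance] FinGraph.fin

/-- Connected graphs on the standard vertex sets `Fin n`. -/
abbrev ConnIdx : Type := Σ n : ℕ, {C : SimpleGraph (Fin n) // C.Connected}

/-- The counting function of a connected graph. -/
noncomputable def connCount (i : ConnIdx) : FinGraph.{v} → ℚ :=
  fun H => countCopies i.2.1 H.graph

/-- The `ℚ`-algebra of functions of finite graphs generated by the connected counting functions. -/
noncomputable def connAlg : Subalgebra ℚ (FinGraph.{v} → ℚ) :=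
  Algebra.adjoin ℚ (Set.range connCount)

/-- `injN G` as a rational-valued function of the target graph. -/
noncomputable def injFun {α : Type*} (G : SimpleGraph α) : FinGraph.{v} → ℚ :=
  fun H => injN G H.graph

/-- `homN G` as a rational-valued function of the target graph. -/
noncomputable def homFun {α : Type*} (G : SimpleGraph α) : FinGraph.{v} → ℚ :=
  fun H => homN G H.graph

theorem injFun_mem_of_connected {α : Type*} [Finite α] (G : SimpleGraph α) (h : NoIsolated G)
    (hG : G.Connected) : (injFun G : FinGraph.{v} → ℚ) ∈ connAlg := by
  have := Fintype.ofFinite α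
  let e := G.overFinIso rfl
  have hmem : connCount ⟨_, _, e.connected_iff.1 hG⟩ ∈ connAlg.{v} :=
    Algebra.subset_adjoin (Set.mem_range_self _)
  convert connAlg.smul_mem hmem (Nat.card (G ≃g G) : ℚ) using 1
  funext H
  simp [injFun, connCount, injN_eq G H.graph h, countCopies_congr e H.graph]

instance finite_setoid {α : Type*} [Finite α] : Finite (Setoid α) :=
  Finite.of_injective (fun r : Setoid α => (r : α → α → Prop)) fun r s hrs => by
    ext a b
    exact iff_of_eq (congrFun (congrFun hrs a) b)

/-- Proper quotients of a connected graph are connected, so every term of the expansion by kernels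
lies in the algebra. -/
theorem homFun_mem_of_connected {α : Type*} [Finite α] (G : SimpleGraph α) (h : NoIsolated G)
    (hG : G.Connected) : (homFun G : FinGraph.{v} → ℚ) ∈ connAlg := by
  have := Fintype.ofFinite {r : Setoid α // Proper G r}
  have hsum : (homFun G : FinGraph.{v} → ℚ) =
      ∑ r : {r : Setoid α // Proper G r}, injFun (quotGraph G r.1) := by
    funext H
    simp [homFun, injFun, homN_eq]
  rw [hsum]
  exact sum_mem fun r _ =>
    injFun_mem_of_connected _ (r.2.noIsolated h) (r.2.connected hG)

theorem homFun_mem {α : Type*} [Finite α] (G : SimpleGraph α) (h : NoIsolated G) :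
    (homFun G : FinGraph.{v} → ℚ) ∈ connAlg := by
  have : Finite G.ConnectedComponent := Quot.finite _
  have := Fintype.ofFinite G.ConnectedComponent
  have hprod : (homFun G : FinGraph.{v} → ℚ) =
      ∏ c : G.ConnectedComponent, homFun c.toSimpleGraph := by
    funext H
    simp [homFun, homN_eq_prod G H.graph]
  rw [hprod]
  exact prod_mem fun c _ =>
    homFun_mem_of_connected _ (noIsolated_component h c) c.connected_toSimpleGraph

theorem card_quotient_lt {α : Type*} [Finite α] {r : Setoid α} (hr : r ≠ ⊥) :
    Nat.card (Quotient r) < Nat.card α := by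
  refine lt_of_le_of_ne (Nat.card_le_card_of_surjective _ Quotient.mk_surjective) fun hc => hr ?_
  have hinj : Injective (Quotient.mk r) :=
    ((Nat.bijective_iff_surjective_and_card _).2 ⟨Quotient.mk_surjective, hc.symm⟩).1
  ext a b
  exact ⟨fun hab => hinj (Quotient.sound hab), fun hab => by
    obtain rfl : a = b := hab
    exact r.refl a⟩

/-- Induction on the number of vertices: in the expansion of the homomorphism count by kernels, the
trivial kernel contributes `injFun G`, and every other kernel a quotient with fewer vertices. -/
theorem injFun_mem (n : ℕ) : ∀ {α : Type u} [Finite α] (G : SimpleGraph α), NoIsolated G →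
    Nat.card α = n → (injFun G : FinGraph.{v} → ℚ) ∈ connAlg := by
  induction n using Nat.strong_induction_on with
  | _ n ih =>
    intro α _ G h hn
    classical
    have := Fintype.ofFinite {r : Setoid α // Proper G r}
    have hbot : Proper G ⊥ := fun a b hab he => hab.ne he
    have hsum : (homFun G : FinGraph.{v} → ℚ) = injFun G +
        ∑ r ∈ Finset.univ.erase (⟨⊥, hbot⟩ : {r : Setoid α // Proper G r}),
          injFun (quotGraph G r.1) := by
      funext H
      have hH := homN_eq G H.graph
      rw [← Finset.add_sum_erase _ _ (Finset.mem_univ ⟨⊥, hbot⟩),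
        injN_quot_bot G H.graph hbot] at hH
      simp [homFun, injFun, hH]
    rw [← sub_eq_iff_eq_add] at hsum
    rw [← hsum]
    refine sub_mem (homFun_mem G h) (sum_mem fun r hr => ?_)
    refine ih _ ?_ _ (r.2.noIsolated h) rfl
    rw [← hn]
    exact card_quotient_lt fun he => (Finset.mem_erase.1 hr).1 (Subtype.ext he)

theorem countCopies_mem {α : Type u} [Finite α] (G : SimpleGraph α) (h : NoIsolated G) :
    (fun H : FinGraph.{v} => (countCopies G H.graph : ℚ)) ∈ connAlg := by
  convert connAlg.smul_mem (injFun_mem _ G h rfl) ((Nat.card (G ≃g G) : ℚ)⁻¹) using 1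
  funext H
  have : Finite (G ≃g G) := DFunLike.finite _
  have hpos : (Nat.card (G ≃g G) : ℚ) ≠ 0 := by
    exact_mod_cast (Nat.card_pos_iff.2 ⟨⟨Iso.refl⟩, this⟩).ne'
  simp only [Pi.smul_apply, injFun, injN_eq G H.graph h, smul_eq_mul, Nat.cast_mul]
  rw [inv_mul_cancel_left₀ hpos]

/-- The counting function of every graph without isolated vertices is a polynomial (over `ℚ`)
in counting functions of connected graphs. -/
theorem countCopies_generated_by_connected {α : Type*} [Fintype α]
    (G : SimpleGraph α) (h : NoIsolated G) :
    ∃ (k : ℕ) (n : Fin k → ℕ) (C : ∀ i, SimpleGraph (Fin (n i)))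
      (p : MvPolynomial (Fin k) ℚ),
      (∀ i, (C i).Connected) ∧
      ∀ (β : Type*) [Fintype β] (H : SimpleGraph β),
        (countCopies G H : ℚ) =
          MvPolynomial.eval (fun i => (countCopies (C i) H : ℚ)) p := by
  have hmem := countCopies_mem G h
  rw [connAlg, Algebra.adjoin_range_eq_range_aeval] at hmem
  obtain ⟨P, hP⟩ := hmem
  obtain ⟨k, f, -, p, rfl⟩ := MvPolynomial.exists_fin_rename P
  refine ⟨k, fun i => (f i).1, fun i => (f i).2.1, p, fun i => (f i).2.2, fun β _ H => ?_⟩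
  have hH := congrFun hP ⟨β, H⟩
  change MvPolynomial.aeval connCount (MvPolynomial.rename f p) _ = _ at hH
  rw [MvPolynomial.aeval_rename] at hH
  rw [← hH]
  -- Evaluation at the graph `H` is an algebra homomorphism, so it commutes with `aeval`.
  change Pi.evalAlgHom ℚ (fun _ : FinGraph => ℚ) ⟨β, H⟩ (MvPolynomial.aeval _ p) = _
  rw [MvPolynomial.comp_aeval_apply, MvPolynomial.aeval_eq_eval]
  rfl
end

section
/- Let C₁, …, C_k be pairwise non-isomorphic connected finite simple graphs, each with at least one vertex, and let p ∈ ℚ[X₁, …, X_k] be a polynomial such that p(N_{C₁}(H), …, N_{C_k}(H)) = 0 for every finite simple graph H. Then p = 0. In other words, the counting functions of connected graphs are algebraically independent over ℚ. -/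
/-!
The counting functions are evaluated on disjoint unions. If `H` is the disjoint union of `n j`
copies of `C j`, `j < k`, then every copy of the connected graph `C i` in `H` lies in a single
component, so the number of copies is the linear form `∑ j, M i j * n j`, where `M i j` is the
number of copies of `C i` in `C j` (`copyEdgeSets_sigmaGraph`, `countCopies_sigmaGraph`).

The matrix `M` is triangular with respect to size (number of vertices plus number of edges): its
diagonal entries are nonzero, and if `i ≠ j` and `C i` has a copy in `C j`, then `C j` is strictly
larger than `C i`, because an injective homomorphism between graphs of the same size is an
isomorphism (`graphSize_lt_of_copy`). Hence `M` is invertible.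

So `p ∘ M` vanishes on `ℕ^k`, which is Zariski dense in `ℚ^k`; thus `p ∘ M = 0`, and `p = 0`
because `M` is surjective.
-/


open SimpleGraph

/-! ### Copies as images of injective homomorphisms -/

/-- The edge sets of the copies of `G` in `H`, a copy being an injective homomorphism. -/
def copyEdgeSets {α β : Type*} (G : SimpleGraph α) (H : SimpleGraph β) : Set (Set (Sym2 β)) :=
  Set.range fun φ : Copy G H => Set.image (Sym2.map φ) G.edgeSet

/-- For a set `E` of edges of `H`, the graph spanned by `E` is isomorphic to `G` exactly when `E` is
the image of the edge set of `G` under an injective homomorphism. Without isolated vertices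
in `G`, every vertex of `G` lands on an endpoint of an edge in `E`. -/
lemma nonempty_graphOfEdges_iso_iff {α β : Type*} {G : SimpleGraph α} {H : SimpleGraph β}
    (hG : NoIsolated G) {E : Set (Sym2 β)} (hE : E ⊆ H.edgeSet) :
    Nonempty (graphOfEdges E ≃g G) ↔ E ∈ copyEdgeSets G H := by
  constructor
  · rintro ⟨ψ⟩
    have key : ∀ {a b}, G.Adj a b → s((ψ.symm a : β), (ψ.symm b : β)) ∈ E := by
      intro a b hab
      have h1 : (graphOfEdges E).Adj (ψ.symm a) (ψ.symm b) := ψ.symm.map_adj_iff.2 hab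
      exact ((SimpleGraph.fromEdgeSet_adj E).1 h1).1
    let f : G →g H := ⟨fun a => (ψ.symm a : β), fun hab => hE (key hab)⟩
    refine ⟨⟨f, fun a b hab => ψ.symm.injective (Subtype.ext hab)⟩, ?_⟩
    ext e
    induction e using Sym2.ind with
    | _ x y =>
    constructor
    · rintro ⟨e, he, hxy⟩
      induction e using Sym2.ind with
      | _ a b =>
      rw [← hxy]
      exact key he
    · intro hxy
      have hadj : (SimpleGraph.fromEdgeSet E).Adj x y :=
        (SimpleGraph.fromEdgeSet_adj E).2 ⟨hxy, H.ne_of_adj (hE hxy)⟩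
      let x' : (SimpleGraph.fromEdgeSet E).support := ⟨x, y, hadj⟩
      let y' : (SimpleGraph.fromEdgeSet E).support := ⟨y, x, hadj.symm⟩
      have h1 : (graphOfEdges E).Adj x' y' := hadj
      refine ⟨s(ψ x', ψ y'), ψ.map_adj_iff.2 h1, ?_⟩
      change s((ψ.symm (ψ x') : β), (ψ.symm (ψ y') : β)) = s(x, y)
      simp [x', y']
  · rintro ⟨φ, rfl⟩
    have hinj : Function.Injective φ := φ.injective
    have hadj : ∀ a b, (SimpleGraph.fromEdgeSet (Sym2.map φ '' G.edgeSet)).Adj (φ a) (φ b) ↔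
        G.Adj a b := by
      intro a b
      rw [SimpleGraph.fromEdgeSet_adj]
      constructor
      · rintro ⟨⟨e, he, heq⟩, -⟩
        rw [← Sym2.map_mk, (Sym2.map.injective hinj).eq_iff] at heq
        rw [← SimpleGraph.mem_edgeSet, ← heq]
        exact he
      · intro hab
        exact ⟨⟨s(a, b), hab, rfl⟩, fun h => hab.ne (hinj h)⟩
    let g : α → (SimpleGraph.fromEdgeSet (Sym2.map φ '' G.edgeSet)).support := fun a =>
      ⟨φ a, by obtain ⟨b, hb⟩ := hG a; exact ⟨φ b, (hadj a b).2 hb⟩⟩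
    have hg : Function.Bijective g := by
      constructor
      · intro a b hab
        exact hinj (congrArg Subtype.val hab)
      · rintro ⟨x, y, hxy⟩
        obtain ⟨⟨e, he, heq⟩, -⟩ := (SimpleGraph.fromEdgeSet_adj _).1 hxy
        have hx : x ∈ Sym2.map φ e := by rw [heq]; simp
        obtain ⟨a, -, rfl⟩ := Sym2.mem_map.1 hx
        exact ⟨a, rfl⟩
    exact ⟨(⟨Equiv.ofBijective g hg, fun {a b} => hadj a b⟩ : G ≃g graphOfEdges _).symm⟩

lemma subset_edgeSet_of_mem_copyEdgeSets {α β : Type*} {G : SimpleGraph α} {H : SimpleGraph β}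
    {E : Set (Sym2 β)} (hE : E ∈ copyEdgeSets G H) : E ⊆ H.edgeSet := by
  obtain ⟨φ, rfl⟩ := hE
  rintro _ ⟨e, he, rfl⟩
  exact (φ.toHom.mapEdgeSet ⟨e, he⟩).2

lemma countCopies_eq_ncard {α β : Type*} [Finite β] {G : SimpleGraph α} (H : SimpleGraph β)
    (hG : NoIsolated G) : countCopies G H = (copyEdgeSets G H).ncard := by
  rw [← Nat.card_coe_set_eq]
  refine Nat.card_congr (Equiv.ofBijective (fun E => ⟨(E.1 : Set (Sym2 β)),
    (nonempty_graphOfEdges_iso_iff hG E.2.1).1 E.2.2⟩) ⟨?_, ?_⟩)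
  · intro E F h
    exact Subtype.ext (Finset.coe_injective (congrArg Subtype.val h))
  · rintro ⟨E, hE⟩
    have hs := subset_edgeSet_of_mem_copyEdgeSets hE
    refine ⟨⟨E.toFinite.toFinset, by simpa using hs, ?_⟩, by simp⟩
    rw [Set.Finite.coe_toFinset]
    exact (nonempty_graphOfEdges_iso_iff hG hs).2 hE

/-! ### Disjoint unions -/

/-- The disjoint union of a family of graphs. -/
def sigmaGraph {ι : Type*} {W : ι → Type*} (K : ∀ a, SimpleGraph (W a)) :
    SimpleGraph (Σ a, W a) where
  Adj x y := ∃ a u v, (K a).Adj u v ∧ x = ⟨a, u⟩ ∧ y = ⟨a, v⟩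
  symm := ⟨by
    rintro _ _ ⟨a, u, v, h, rfl, rfl⟩
    exact ⟨a, v, u, h.symm, rfl, rfl⟩⟩
  loopless := ⟨by
    rintro x ⟨a, u, v, h, rfl, h2⟩
    obtain rfl : u = v := by simpa using h2
    exact h.ne rfl⟩

lemma sigmaGraph_adj_mk {ι : Type*} {W : ι → Type*} (K : ∀ a, SimpleGraph (W a)) {a : ι}
    {u v : W a} : (sigmaGraph K).Adj ⟨a, u⟩ ⟨a, v⟩ ↔ (K a).Adj u v := by
  constructor
  · rintro ⟨b, u', v', h, h1, h2⟩
    obtain ⟨rfl, h1⟩ := Sigma.mk.inj_iff.1 h1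
    obtain ⟨_, h2⟩ := Sigma.mk.inj_iff.1 h2
    rw [heq_eq_eq] at h1 h2
    rwa [h1, h2]
  · intro h
    exact ⟨a, u, v, h, rfl, rfl⟩

/-- A copy of a connected graph in a disjoint union lies in one of the pieces. -/
lemma copyEdgeSets_sigmaGraph {α ι : Type*} {W : ι → Type*} {G : SimpleGraph α}
    (hG : G.Connected) (K : ∀ a, SimpleGraph (W a)) :
    copyEdgeSets G (sigmaGraph K) =
      ⋃ a, (fun E => Sym2.map (Sigma.mk a) '' E) '' copyEdgeSets G (K a) := by
  ext E
  simp only [Set.mem_iUnion, Set.mem_image]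
  constructor
  · rintro ⟨φ, rfl⟩
    obtain ⟨v₀⟩ := hG.nonempty
    have hfst : ∀ v, (φ v).1 = (φ v₀).1 := by
      intro v
      obtain ⟨w⟩ := hG.preconnected v v₀
      induction w with
      | nil => rfl
      | cons h _ ih =>
        obtain ⟨a, u, v, -, h1, h2⟩ := φ.toHom.map_adj h
        rw [← ih]
        change (φ.toHom _).1 = (φ.toHom _).1
        rw [h1, h2]
    have hex : ∀ v, ∃ u : W (φ v₀).1, φ v = ⟨(φ v₀).1, u⟩ := by
      intro v
      rw [← hfst v]
      exact ⟨_, rfl⟩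
    choose g hg using hex
    have hadj : ∀ {a b}, G.Adj a b → (K (φ v₀).1).Adj (g a) (g b) := by
      intro a b hab
      rw [← sigmaGraph_adj_mk, ← hg, ← hg]
      exact φ.toHom.map_adj hab
    refine ⟨(φ v₀).1, _, ⟨⟨⟨g, hadj⟩, ?_⟩, rfl⟩, ?_⟩
    · intro a b hab
      apply φ.injective
      change φ a = φ b
      rw [hg a, hg b]
      exact congrArg _ hab
    · simp only [Set.image_image, Sym2.map_map]
      have : (φ : α → Σ a, W a) = Sigma.mk (φ v₀).1 ∘ g := funext hg
      exact congrArg (fun f => Sym2.map f '' G.edgeSet) this.symm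
  · rintro ⟨a, _, ⟨φ, rfl⟩, rfl⟩
    refine ⟨⟨⟨fun v => ⟨a, φ v⟩, fun h => (sigmaGraph_adj_mk K).2 (φ.toHom.map_adj h)⟩, ?_⟩, ?_⟩
    · intro u v huv
      exact φ.injective (sigma_mk_injective huv)
    · simp only [Set.image_image, Sym2.map_map]
      rfl

lemma countCopies_sigmaGraph {α ι : Type*} [Fintype ι] {W : ι → Type*} [∀ a, Finite (W a)]
    {G : SimpleGraph α} (hG : G.Connected) (hG' : NoIsolated G) (K : ∀ a, SimpleGraph (W a)) :
    countCopies G (sigmaGraph K) = ∑ a, countCopies G (K a) := by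
  rw [countCopies_eq_ncard _ hG', copyEdgeSets_sigmaGraph hG, Set.ncard_iUnion_of_finite,
    finsum_eq_sum_of_fintype]
  · refine Finset.sum_congr rfl fun a _ => ?_
    rw [countCopies_eq_ncard _ hG', Set.ncard_image_of_injective]
    exact Set.image_injective.2 (Sym2.map.injective sigma_mk_injective)
  · exact fun a => Set.toFinite _
  · intro a b hab
    rw [Function.onFun, Set.disjoint_left]
    rintro _ ⟨_, ⟨φ, rfl⟩, rfl⟩ ⟨_, ⟨ψ, rfl⟩, h⟩
    -- The two edge sets would share an edge, as `G` has at least one.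
    obtain ⟨v⟩ := hG.nonempty
    obtain ⟨w, hvw⟩ := hG' v
    have hmem : Sym2.map (Sigma.mk a) (Sym2.map φ s(v, w)) ∈
        (Sym2.map (Sigma.mk b) '' (Sym2.map ψ '' G.edgeSet) : Set (Sym2 (Σ a, W a))) := by
      have h' : (Sym2.map (Sigma.mk b) '' (Sym2.map ψ '' G.edgeSet) : Set (Sym2 (Σ a, W a))) =
        Sym2.map (Sigma.mk a) '' (Sym2.map φ '' G.edgeSet) := h
      rw [h']
      exact Set.mem_image_of_mem _ (Set.mem_image_of_mem _ hvw)
    obtain ⟨e, -, he⟩ := hmem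
    have hx : (⟨a, φ v⟩ : Σ a, W a) ∈ Sym2.map (Sigma.mk b) e := by rw [he]; simp
    obtain ⟨u, -, hu⟩ := Sym2.mem_map.1 hx
    exact hab (congrArg Sigma.fst hu).symm

/-! ### Triangularity of the matrix of copy counts -/

/-- The number of vertices plus the number of edges. -/
noncomputable def graphSize {α : Type*} (G : SimpleGraph α) : ℕ := Nat.card α + Nat.card G.edgeSet

/-- A copy of a graph in a non-isomorphic graph strictly increases the size: otherwise it would be
bijective on vertices and on edges. -/
lemma graphSize_lt_of_copy {α β : Type*} [Finite α] [Finite β] {G : SimpleGraph α}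
    {H : SimpleGraph β} (φ : Copy G H) (hiso : IsEmpty (G ≃g H)) :
    graphSize G < graphSize H := by
  have hv : Nat.card α ≤ Nat.card β := Nat.card_le_card_of_injective φ φ.injective
  have he : Nat.card G.edgeSet ≤ Nat.card H.edgeSet :=
    Nat.card_le_card_of_injective _ φ.mapEdgeSet.injective
  by_contra hlt
  unfold graphSize at hlt
  have hvb : Function.Bijective φ :=
    (Nat.bijective_iff_injective_and_card _).2 ⟨φ.injective, by omega⟩
  have heb : Function.Bijective φ.mapEdgeSet :=
    (Nat.bijective_iff_injective_and_card _).2 ⟨φ.mapEdgeSet.injective, by omega⟩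
  refine hiso.false ⟨Equiv.ofBijective φ hvb, fun {a b} => ⟨fun hab => ?_, φ.toHom.map_adj⟩⟩
  obtain ⟨⟨e, he'⟩, heq⟩ := heb.2 ⟨s(φ a, φ b), hab⟩
  have heq' : Sym2.map φ e = Sym2.map φ s(a, b) := congrArg Subtype.val heq
  rw [Sym2.map.injective φ.injective heq'] at he'
  exact he'

lemma nonempty_copy_of_countCopies_ne_zero {α β : Type*} [Finite β] {G : SimpleGraph α}
    {H : SimpleGraph β} (hG : NoIsolated G) (h : countCopies G H ≠ 0) : Nonempty (Copy G H) := by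
  rw [countCopies_eq_ncard _ hG] at h
  obtain ⟨_, φ, -⟩ := Set.nonempty_of_ncard_ne_zero h
  exact ⟨φ⟩

lemma countCopies_ne_zero_of_copy {α β : Type*} [Finite β] {G : SimpleGraph α}
    {H : SimpleGraph β} (hG : NoIsolated G) (φ : Copy G H) : countCopies G H ≠ 0 := by
  rw [countCopies_eq_ncard _ hG]
  exact Set.ncard_ne_zero_of_mem ⟨φ, rfl⟩

lemma noIsolated_of_connected {α : Type*} {G : SimpleGraph α} (hG : G.Connected)
    (he : G.edgeSet.Nonempty) : NoIsolated G := by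
  obtain ⟨e, he⟩ := he
  induction e using Sym2.ind with
  | _ a b =>
  have : Nontrivial α := ⟨a, b, G.ne_of_adj he⟩
  exact fun v => hG.preconnected.exists_adj_of_nontrivial v

/-- A square matrix with nonzero diagonal that is strictly triangular off the diagonal, with respect
to a rank function `m` on the indices, is surjective as a linear map. -/
lemma mulVec_surjective_of_rank {ι : Type*} [Fintype ι] [DecidableEq ι] (M : Matrix ι ι ℚ)
    (m : ι → ℕ) (hdiag : ∀ i, M i i ≠ 0) (hoff : ∀ i j, i ≠ j → M i j ≠ 0 → m i < m j) :
    Function.Surjective M.mulVec := by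
  rw [Matrix.mulVec_surjective_iff_isUnit, ← Matrix.mulVec_injective_iff_isUnit]
  refine (injective_iff_map_eq_zero M.mulVecLin).2 fun v hv => ?_
  by_contra hne
  obtain ⟨i₀, hi₀⟩ := Function.ne_iff.1 hne
  -- Row `i` of `M *ᵥ v`, with `i` of maximal rank in the support of `v`, is `M i i * v i`.
  obtain ⟨i, hi, hmax⟩ := Finset.exists_max_image (Finset.univ.filter fun i => v i ≠ 0) m
    ⟨i₀, by simpa using hi₀⟩
  have hi' : v i ≠ 0 := by simpa using hi
  have hrow : (M.mulVec v) i = M i i * v i := by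
    refine Finset.sum_eq_single i (fun j _ hji => ?_) (by simp)
    by_contra hprod
    obtain ⟨h1, h2⟩ := mul_ne_zero_iff.1 hprod
    have h3 := hoff i j hji.symm h1
    have h4 := hmax j (by simpa using h2)
    omega
  have hz : (M.mulVec v) i = 0 := congrFun hv i
  exact mul_ne_zero (hdiag i) hi' (hrow ▸ hz)

/-! ### Algebraic independence -/

/-- The counting functions of pairwise non-isomorphic connected graphs (each with at least
one edge) are algebraically independent over `ℚ`. -/
theorem countCopies_connected_algebraicallyIndependent
    (k : ℕ) {V : Fin k → Type*} [∀ i, Fintype (V i)]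
    (C : ∀ i, SimpleGraph (V i))
    (hconn : ∀ i, (C i).Connected)
    (hedge : ∀ i, (C i).edgeSet.Nonempty)
    (hpair : ∀ i j, i ≠ j → IsEmpty (C i ≃g C j))
    (p : MvPolynomial (Fin k) ℚ)
    (h : ∀ (β : Type) [Fintype β] (H : SimpleGraph β),
      MvPolynomial.eval (fun i => (countCopies (C i) H : ℚ)) p = 0) :
    p = 0 := by
  have hiso : ∀ i, NoIsolated (C i) := fun i => noIsolated_of_connected (hconn i) (hedge i)
  -- The graphs `C j` may live in any universe, the test graphs `H` only in `Type`.
  let D : ∀ j, SimpleGraph (Fin (Fintype.card (V j))) := fun j => (C j).overFin rfl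
  have e : ∀ j, C j ≃g D j := fun j => (C j).overFinIso rfl
  let M : Matrix (Fin k) (Fin k) ℚ := fun i j => (countCopies (C i) (D j) : ℚ)
  have hM : Function.Surjective M.mulVec := by
    refine mulVec_surjective_of_rank M (fun i => graphSize (C i)) (fun i => ?_) fun i j hij hne => ?_
    · exact Nat.cast_ne_zero.2 (countCopies_ne_zero_of_copy (hiso i) (e i).toCopy)
    · obtain ⟨φ⟩ := nonempty_copy_of_countCopies_ne_zero (hiso i) (Nat.cast_ne_zero.1 hne)
      exact graphSize_lt_of_copy ((e j).symm.toCopy.comp φ) (hpair i j hij)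
  have hnat : ∀ n : Fin k → ℕ, MvPolynomial.eval (M.mulVec fun j => (n j : ℚ)) p = 0 := by
    intro n
    rw [← h (Σ a : (Σ j, Fin (n j)), Fin (Fintype.card (V a.1))) (sigmaGraph fun a => D a.1)]
    congr 2
    funext i
    have hsum : countCopies (C i) (sigmaGraph fun a : (Σ j, Fin (n j)) => D a.1) =
        ∑ j, countCopies (C i) (D j) * n j := by
      rw [countCopies_sigmaGraph (hconn i) (hiso i), Fintype.sum_sigma]
      refine Finset.sum_congr rfl fun j _ =>
        (Finset.sum_const (countCopies (C i) (D j))).trans ?_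
      simp [mul_comm]
    simp [hsum, Matrix.mulVec, dotProduct, M]
  let q : MvPolynomial (Fin k) ℚ :=
    MvPolynomial.bind₁ (fun i => ∑ j, MvPolynomial.C (M i j) * MvPolynomial.X j) p
  have hq : ∀ y, MvPolynomial.eval y q = MvPolynomial.eval (M.mulVec y) p := by
    intro y
    simp only [q, MvPolynomial.eval, MvPolynomial.eval₂Hom_bind₁]
    congr 2
    funext i
    simp [Matrix.mulVec, dotProduct]
  have hq0 : q = 0 := by
    refine MvPolynomial.funext_set (fun _ => Set.range ((↑) : ℕ → ℚ))
      (fun _ => Set.infinite_range_of_injective Nat.cast_injective) fun x hx => ?_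
    choose n hn using fun j => hx j (Set.mem_univ j)
    obtain rfl : (fun j => (n j : ℚ)) = x := funext hn
    rw [hq, hnat, map_zero]
  refine MvPolynomial.funext fun x => ?_
  obtain ⟨y, rfl⟩ := hM x
  rw [← hq, hq0]
  simp
end
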